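/- There exists a 2-(24,4,1) packing with 42 blocks whose leave is a vertex-disjoint union of three cycles of length 3 and three cycles of length 5, covering all 24 points (leave type 3^3 5^3). -/

import Mathlib

/-!
The packing is explicit, so every claim about it is a finite check.

It is invariant under a fixed-point-free permutation of order 3, which rotates each of the
triangles `{0, 1, 2}`, `{3, 4, 5}`, `{6, 7, 8}` and permutes cyclically the three pentagons on
`9..13`, `14..18`, `19..23`. No block is invariant under this permutation, so the 42 blocks form
14 orbits of size 3. The blocks cover `42 * 6 = 252` of the `276` pairs, and the other 24 pairs
are the edges of the six cycles.

The finite checks (`pairwise_blockList`, `covered_or_cycle_edge`, `cycle_edge_uncovered`) are made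
on lists of points, and the claims about finsets are deduced from them.
-/

/-- A 2-(24,4,1) packing: a collection of 4-element blocks on 24 points such that
every pair of distinct points lies in at most one block. -/
def IsPacking (B : Finset (Finset (Fin 24))) : Prop :=
  (∀ b ∈ B, b.card = 4) ∧
  ∀ p q : Fin 24, p ≠ q → ∀ b₁ ∈ B, ∀ b₂ ∈ B,
    p ∈ b₁ → q ∈ b₁ → p ∈ b₂ → q ∈ b₂ → b₁ = b₂

/-- Adjacency in the leave of a packing: the pair of distinct points is covered by no block. -/
def LeaveAdj (B : Finset (Finset (Fin 24))) (p q : Fin 24) : Prop :=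
  p ≠ q ∧ ∀ b ∈ B, ¬ (p ∈ b ∧ q ∈ b)

/-- The leave of the packing `B` is a vertex-disjoint union of cycles whose lengths are
given by the list `L`, covering all 24 points. -/
def LeaveIsCycleType (B : Finset (Finset (Fin 24))) (L : List ℕ) : Prop :=
  ∃ f : (i : Fin L.length) → ZMod (L.get i) → Fin 24,
    Function.Bijective (fun x : Σ i : Fin L.length, ZMod (L.get i) => f x.1 x.2) ∧
    ∀ p q : Fin 24, LeaveAdj B p q ↔
      ∃ i k, (p = f i k ∧ q = f i (k + 1)) ∨ (q = f i k ∧ p = f i (k + 1))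

/-- The blocks of the packing as lists of points. Each row is an orbit of the permutation
`(0 1 2)(3 4 5)(6 7 8)(9 14 19)(10 15 20)(11 16 21)(12 17 22)(13 18 23)`. -/
def blockList : List (List (Fin 24)) :=
  [ [0, 3, 13, 18], [1, 4, 18, 23], [2, 5, 13, 23],
    [0, 4, 12, 20], [1, 5, 10, 17], [2, 3, 15, 22],
    [0, 5, 8, 15], [1, 3, 6, 20], [2, 4, 7, 10],
    [0, 6, 10, 14], [1, 7, 15, 19], [2, 8, 9, 20],
    [0, 7, 21, 23], [1, 8, 11, 13], [2, 6, 16, 18],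
    [0, 9, 17, 19], [1, 9, 14, 22], [2, 12, 14, 19],
    [0, 11, 16, 22], [1, 12, 16, 21], [2, 11, 17, 21],
    [3, 7, 9, 16], [4, 8, 14, 21], [5, 6, 11, 19],
    [3, 8, 12, 17], [4, 6, 17, 22], [5, 7, 12, 22],
    [3, 10, 19, 21], [4, 9, 11, 15], [5, 14, 16, 20],
    [3, 11, 14, 23], [4, 13, 16, 19], [5, 9, 18, 21],
    [6, 9, 12, 23], [7, 13, 14, 17], [8, 18, 19, 22],
    [6, 13, 15, 21], [7, 11, 18, 20], [8, 10, 16, 23],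
    [10, 12, 15, 18], [15, 17, 20, 23], [10, 13, 20, 22] ]

/-- The packing, as a set of blocks. -/
def blocks : Finset (Finset (Fin 24)) :=
  (blockList.map List.toFinset).toFinset

/-- The `k`-th vertex of the `i`-th cycle of the leave. Each cycle runs through consecutive
points, starting from the listed one. -/
def cycleVertex (i : Fin [3, 3, 3, 5, 5, 5].length) (k : ZMod ([3, 3, 3, 5, 5, 5].get i)) :
    Fin 24 :=
  Fin.ofNat 24 ([0, 3, 6, 9, 14, 19].get i + k.val)

/-- The successor of a point on its cycle in the leave. -/
def cycleSucc : Fin 24 → Fin 24 :=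
  ![1, 2, 0, 4, 5, 3, 7, 8, 6, 10, 11, 12, 13, 9, 15, 16, 17, 18, 14, 20, 21, 22, 23, 19]

/-- Nonzero cycle lengths make the types `ZMod` of cycle positions finite, so that statements
quantified over them are decidable. -/
instance neZero_cycleLength (i : Fin [3, 3, 3, 5, 5, 5].length) :
    NeZero ([3, 3, 3, 5, 5, 5].get i) :=
  ⟨by revert i; decide⟩

lemma mem_blocks {b : Finset (Fin 24)} : b ∈ blocks ↔ ∃ l ∈ blockList, l.toFinset = b := by
  simp [blocks]

lemma nodup_and_length : ∀ l ∈ blockList, l.Nodup ∧ l.length = 4 := by decide +kernel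

/-- Any two blocks in different positions of `blockList` share at most one point. -/
lemma pairwise_blockList :
    blockList.Pairwise fun l m => (l.filter (· ∈ m)).length ≤ 1 := by
  decide +kernel

lemma card_toFinset {l : List (Fin 24)} (hl : l ∈ blockList) : l.toFinset.card = 4 := by
  obtain ⟨hn, h4⟩ := nodup_and_length l hl
  rw [List.toFinset_card_of_nodup hn, h4]

lemma card_inter_le {l m : List (Fin 24)} (h : (l.filter (· ∈ m)).length ≤ 1) :
    (l.toFinset ∩ m.toFinset).card ≤ 1 := by
  have he : l.toFinset ∩ m.toFinset = (l.filter (· ∈ m)).toFinset := by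
    ext x; simp
  rw [he]
  exact (List.toFinset_card_le _).trans h

lemma pairwise_inter :
    (blockList.map List.toFinset).Pairwise fun b c => (b ∩ c).card ≤ 1 :=
  List.pairwise_map.mpr (pairwise_blockList.imp card_inter_le)

lemma blocks_card : blocks.card = 42 := by
  rw [blocks, List.toFinset_card_of_nodup]
  · decide +kernel
  · refine List.Pairwise.imp_of_mem ?_ pairwise_inter
    rintro b c hb - h rfl
    obtain ⟨l, hl, rfl⟩ := List.mem_map.mp hb
    rw [Finset.inter_self, card_toFinset hl] at h
    omega

lemma isPacking_blocks : IsPacking blocks := by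
  refine ⟨fun b hb => ?_, fun p q hpq b₁ h₁ b₂ h₂ hp₁ hq₁ hp₂ hq₂ => ?_⟩
  · obtain ⟨l, hl, rfl⟩ := mem_blocks.mp hb
    exact card_toFinset hl
  · by_contra hne
    have : Std.Symm fun b c : Finset (Fin 24) => (b ∩ c).card ≤ 1 :=
      ⟨fun b c h => by rwa [Finset.inter_comm]⟩
    have h : (b₁ ∩ b₂).card ≤ 1 :=
      pairwise_inter.forall (List.mem_toFinset.mp h₁) (List.mem_toFinset.mp h₂) hne
    exact hpq (Finset.card_le_one.mp h p (Finset.mem_inter.mpr ⟨hp₁, hp₂⟩)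
      q (Finset.mem_inter.mpr ⟨hq₁, hq₂⟩))

lemma leaveAdj_iff {p q : Fin 24} :
    LeaveAdj blocks p q ↔ p ≠ q ∧ ∀ l ∈ blockList, ¬ (p ∈ l ∧ q ∈ l) := by
  simp [LeaveAdj, mem_blocks]

lemma leaveAdj_symm {p q : Fin 24} (h : LeaveAdj blocks p q) : LeaveAdj blocks q p :=
  ⟨h.1.symm, fun b hb hqp => h.2 b hb hqp.symm⟩

lemma covered_or_cycle_edge : ∀ p q : Fin 24, p = q ∨ q = cycleSucc p ∨ p = cycleSucc q ∨
    ∃ l ∈ blockList, p ∈ l ∧ q ∈ l := by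
  decide +kernel

lemma cycle_edge_uncovered : ∀ p : Fin 24,
    p ≠ cycleSucc p ∧ ∀ l ∈ blockList, ¬ (p ∈ l ∧ cycleSucc p ∈ l) := by
  decide +kernel

lemma cycleVertex_succ : ∀ i k, cycleVertex i (k + 1) = cycleSucc (cycleVertex i k) := by
  decide +kernel

lemma cycleVertex_injective : ∀ i k j l, cycleVertex i k = cycleVertex j l →
    (⟨i, k⟩ : Σ i : Fin [3, 3, 3, 5, 5, 5].length, ZMod ([3, 3, 3, 5, 5, 5].get i)) = ⟨j, l⟩ := by
  decide +kernel

lemma cycleVertex_surjective : ∀ p, ∃ i k, cycleVertex i k = p := by decide +kernel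

lemma leaveAdj_iff_cycle_edge (p q : Fin 24) : LeaveAdj blocks p q ↔
    ∃ i k, (p = cycleVertex i k ∧ q = cycleVertex i (k + 1)) ∨
      (q = cycleVertex i k ∧ p = cycleVertex i (k + 1)) := by
  constructor
  · intro h
    obtain ⟨hne, huncov⟩ := leaveAdj_iff.mp h
    rcases covered_or_cycle_edge p q with heq | hq | hp | ⟨l, hl, hpq⟩
    · exact absurd heq hne
    · obtain ⟨i, k, rfl⟩ := cycleVertex_surjective p
      exact ⟨i, k, .inl ⟨rfl, by rw [hq, cycleVertex_succ]⟩⟩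
    · obtain ⟨i, k, rfl⟩ := cycleVertex_surjective q
      exact ⟨i, k, .inr ⟨rfl, by rw [hp, cycleVertex_succ]⟩⟩
    · exact absurd hpq (huncov l hl)
  · rintro ⟨i, k, ⟨rfl, rfl⟩ | ⟨rfl, rfl⟩⟩ <;> rw [cycleVertex_succ]
    · exact leaveAdj_iff.mpr (cycle_edge_uncovered _)
    · exact leaveAdj_symm (leaveAdj_iff.mpr (cycle_edge_uncovered _))

/-- There is a 2-(24,4,1) packing with 42 blocks whose leave is a vertex-disjoint
union of cycles of lengths [3, 3, 3, 5, 5, 5], covering all 24 points. -/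
theorem exists_max_packing_with_leave_type :
    ∃ B : Finset (Finset (Fin 24)), IsPacking B ∧ B.card = 42 ∧
      LeaveIsCycleType B [3, 3, 3, 5, 5, 5] := by
  refine ⟨blocks, isPacking_blocks, blocks_card, cycleVertex, ⟨?_, fun p => ?_⟩,
    leaveAdj_iff_cycle_edge⟩
  · rintro ⟨i, k⟩ ⟨j, l⟩ h
    exact cycleVertex_injective i k j l h
  · obtain ⟨i, k, h⟩ := cycleVertex_surjective p
    exact ⟨⟨i, k⟩, h⟩
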